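/- arXiv:2512.14617 — 4 statements merged into one kernel-verified Lean document; each statement's English description precedes it below -/
import Mathlib

section
/- Let k ≥ 2 and m ≥ 1 be natural numbers, let p be a probability mass function on Fin k (p j ≥ 0 and ∑_j p j = 1), let (Ω, μ) be a probability space, and let Y : Fin m → Ω → Fin k be independent identically distributed random variables each with law p (i.e., μ {ω : Y i ω = j} = p j for all i, j). For ω ∈ Ω define the empirical distribution p̂_ω(j) = (1/m) · |{ i : Y i ω = j }|. Then for every ε > 0, μ { ω : ∑_{j < k} |p̂_ω(j) − p j| > ε } ≤ (2^k − 2) · exp(−m ε² / 2). -/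
open MeasureTheory ProbabilityTheory

/-!
The deviations `d a` of the empirical frequencies from their means sum to zero, hence
`∑ a, |d a|` is twice the sum of `d` over the set where it is positive, which is neither empty nor
everything. So an `ℓ₁` error above `ε` forces one of the `2 ^ k - 2` nontrivial events of the
alphabet to be over-represented by at least `ε / 2`. Hoeffding's inequality bounds the probability
of each of these by `exp (-m ε ^ 2 / 2)`.
-/

section FiniteAlphabet

variable {α R : Type*} [Ring R] [LinearOrder R] [IsOrderedRing R]

lemma sum_abs_eq_two_mul_sum_filter_pos {s : Finset α} {d : α → R} (hd : ∑ a ∈ s, d a = 0) :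
    ∑ a ∈ s, |d a| = 2 * ∑ a ∈ s with 0 < d a, d a := by
  calc ∑ a ∈ s, |d a| = ∑ a ∈ s, (|d a| + d a) := by rw [Finset.sum_add_distrib, hd, add_zero]
    _ = ∑ a ∈ s, if 0 < d a then 2 * d a else 0 := by
      refine Finset.sum_congr rfl fun a _ ↦ ?_
      split_ifs with ha
      · rw [abs_of_pos ha, two_mul]
      · rw [abs_of_nonpos (not_lt.mp ha), neg_add_cancel]
    _ = 2 * ∑ a ∈ s with 0 < d a, d a := by rw [← Finset.sum_filter, Finset.mul_sum]

variable [Fintype α] [DecidableEq α]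

lemma exists_mem_compl_empty_univ_sum_abs_eq_two_mul_sum {d : α → R} (hd : ∑ a, d a = 0)
    (hpos : 0 < ∑ a, |d a|) :
    ∃ A ∈ ({∅, Finset.univ}ᶜ : Finset (Finset α)), ∑ a, |d a| = 2 * ∑ a ∈ A, d a := by
  have hsum := sum_abs_eq_two_mul_sum_filter_pos hd
  refine ⟨_, ?_, hsum⟩
  have hne : ∑ a with 0 < d a, d a ≠ 0 := right_ne_zero_of_mul (hsum ▸ hpos.ne')
  rw [Finset.mem_compl, Finset.mem_insert, Finset.mem_singleton]
  rintro (hA | hA) <;> rw [hA] at hne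
  · exact hne Finset.sum_empty
  · exact hne hd

lemma card_compl_empty_univ [Nonempty α] :
    (({∅, Finset.univ}ᶜ : Finset (Finset α)).card : ℝ) = 2 ^ Fintype.card α - 2 := by
  rw [Finset.card_compl, Nat.cast_sub (Finset.card_le_univ _), Fintype.card_finset,
    Finset.card_pair Finset.univ_nonempty.ne_empty.symm]
  norm_num

end FiniteAlphabet

section Hoeffding

variable {ι Ω : Type*} [MeasurableSpace Ω] {μ : Measure Ω} [IsProbabilityMeasure μ]

lemma measureReal_sum_sub_integral_ge_le {X : ι → Ω → ℝ} {s : Finset ι} {a b t : ℝ}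
    (hindep : iIndepFun X μ) (hX : ∀ i ∈ s, AEMeasurable (X i) μ)
    (hab : ∀ i ∈ s, ∀ᵐ ω ∂μ, X i ω ∈ Set.Icc a b) (ht : 0 ≤ t) :
    μ.real {ω | t ≤ ∑ i ∈ s, (X i ω - μ[X i])} ≤
      Real.exp (-2 * t ^ 2 / (s.card * (b - a) ^ 2)) := by
  have hcentered : iIndepFun (fun i ω ↦ X i ω - μ[X i]) μ :=
    hindep.comp (fun i (x : ℝ) ↦ x - ∫ ω, X i ω ∂μ) fun _ ↦ measurable_id.sub_const _
  refine (HasSubgaussianMGF.measure_sum_ge_le_of_iIndepFun hcentered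
    (fun i hi ↦ hasSubgaussianMGF_of_mem_Icc (hX i hi) (hab i hi)) ht).trans_eq ?_
  have hproxy : 2 * ((∑ _i ∈ s, (‖b - a‖₊ / 2) ^ 2 : NNReal) : ℝ) =
      s.card * (b - a) ^ 2 / 2 := by
    push_cast
    rw [Finset.sum_const, nsmul_eq_mul, Real.norm_eq_abs, div_pow, sq_abs]
    ring
  rw [hproxy, div_div_eq_mul_div]
  ring_nf

end Hoeffding

section Frequencies

variable {ι α Ω : Type*} [Fintype ι] [MeasurableSpace Ω]

/-- The empirical distribution of a finite sample `y`: the proportion of indices at which `y` takes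
the value `a`. It is `0` for the empty sample. -/
noncomputable def empiricalFreq [DecidableEq α] (y : ι → α) (a : α) : ℝ :=
  1 / Fintype.card ι * (Finset.univ.filter fun i ↦ y i = a).card

/-- The average of the laws of a finite family of random variables `Y`, as a mass function; it is
the mean of the empirical distribution of `Y`. It is `0` for the empty family. -/
noncomputable def averageLaw (μ : Measure Ω) (Y : ι → Ω → α) (a : α) : ℝ :=
  1 / Fintype.card ι * ∑ i, μ.real (Y i ⁻¹' {a})

lemma averageLaw_eq_of_forall_eq_ofReal [Nonempty ι] {μ : Measure Ω} {Y : ι → Ω → α} {a : α}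
    {q : ℝ} (hq : 0 ≤ q) (hlaw : ∀ i, μ (Y i ⁻¹' {a}) = ENNReal.ofReal q) :
    averageLaw μ Y a = q := by
  simp [averageLaw, measureReal_def, hlaw, ENNReal.toReal_ofReal hq]

lemma sum_empiricalFreq [DecidableEq α] (y : ι → α) (A : Finset α) :
    ∑ a ∈ A, empiricalFreq y a = 1 / Fintype.card ι * ∑ i, (A : Set α).indicator 1 (y i) := by
  simp only [empiricalFreq, ← Finset.mul_sum, Finset.card_filter, Nat.cast_sum]
  rw [Finset.sum_comm]
  simp [Set.indicator_apply]

variable {μ : Measure Ω} [MeasurableSpace α] [MeasurableSingletonClass α] {Y : ι → Ω → α}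

lemma sum_averageLaw [IsFiniteMeasure μ] (hY : ∀ i, Measurable (Y i)) (A : Finset α) :
    ∑ a ∈ A, averageLaw μ Y a = 1 / Fintype.card ι * ∑ i, μ.real (Y i ⁻¹' A) := by
  simp only [averageLaw, ← Finset.mul_sum]
  rw [Finset.sum_comm]
  congr! 2 with i
  exact sum_measureReal_preimage_singleton A fun a _ ↦ hY i (measurableSet_singleton a)

variable [DecidableEq α] [IsProbabilityMeasure μ]

lemma sum_empiricalFreq_sub_averageLaw_eq_zero [Fintype α] (hY : ∀ i, Measurable (Y i)) (ω : Ω) :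
    ∑ a, (empiricalFreq (Y · ω) a - averageLaw μ Y a) = 0 := by
  rw [Finset.sum_sub_distrib, sum_empiricalFreq, sum_averageLaw hY]
  simp

lemma measureReal_sum_empiricalFreq_sub_averageLaw_ge_le [Nonempty ι]
    (hY : ∀ i, Measurable (Y i)) (hindep : iIndepFun Y μ) (A : Finset α) {t : ℝ} (ht : 0 ≤ t) :
    μ.real {ω | t ≤ ∑ a ∈ A, (empiricalFreq (Y · ω) a - averageLaw μ Y a)} ≤
      Real.exp (-2 * Fintype.card ι * t ^ 2) := by
  let X : ι → Ω → ℝ := fun i ω ↦ (A : Set α).indicator 1 (Y i ω)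
  have hindicator : Measurable ((A : Set α).indicator (1 : α → ℝ)) :=
    measurable_one.indicator A.measurableSet
  have hmean (i : ι) : μ[X i] = μ.real (Y i ⁻¹' A) :=
    integral_indicator_one (hY i A.measurableSet)
  have hbounded (i : ι) : ∀ᵐ ω ∂μ, X i ω ∈ Set.Icc 0 1 := .of_forall fun ω ↦
    ⟨Set.indicator_nonneg (fun _ _ ↦ zero_le_one) _,
      Set.indicator_le_self' (fun _ _ ↦ zero_le_one) _⟩
  have hcard : (0 : ℝ) < Fintype.card ι := Nat.cast_pos.mpr Fintype.card_pos
  have hevent : {ω | t ≤ ∑ a ∈ A, (empiricalFreq (Y · ω) a - averageLaw μ Y a)} =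
      {ω | Fintype.card ι * t ≤ ∑ i, (X i ω - μ[X i])} := by
    ext ω
    simp only [Set.mem_ofPred_eq, Finset.sum_sub_distrib, sum_empiricalFreq, sum_averageLaw hY,
      hmean, ← mul_sub, one_div]
    exact le_inv_mul_iff₀ hcard
  rw [hevent]
  refine (measureReal_sum_sub_integral_ge_le (hindep.comp _ fun _ ↦ hindicator)
    (fun i _ ↦ (hindicator.comp (hY i)).aemeasurable) (fun i _ ↦ hbounded i)
    (by positivity)).trans_eq ?_
  rw [Finset.card_univ]
  congr 1
  field_simp
  ring

theorem weissman_l1_concentration_general [Fintype α] [Nonempty ι]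
    (hY : ∀ i, Measurable (Y i)) (hindep : iIndepFun Y μ) {ε : ℝ} (hε : 0 ≤ ε) :
    μ.real {ω | ε < ∑ a, |empiricalFreq (Y · ω) a - averageLaw μ Y a|} ≤
      (2 ^ Fintype.card α - 2) * Real.exp (-(Fintype.card ι : ℝ) * ε ^ 2 / 2) := by
  have : Nonempty Ω := nonempty_of_isProbabilityMeasure μ
  have : Nonempty α := .map (Y (Classical.arbitrary ι)) this
  let overrepresented (A : Finset α) : Set Ω :=
    {ω | ε / 2 ≤ ∑ a ∈ A, (empiricalFreq (Y · ω) a - averageLaw μ Y a)}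
  have hcover : {ω | ε < ∑ a, |empiricalFreq (Y · ω) a - averageLaw μ Y a|} ⊆
      ⋃ A ∈ ({∅, Finset.univ}ᶜ : Finset (Finset α)), overrepresented A := by
    intro ω (hω : ε < _)
    obtain ⟨A, hA, hsum⟩ := exists_mem_compl_empty_univ_sum_abs_eq_two_mul_sum
      (sum_empiricalFreq_sub_averageLaw_eq_zero hY ω) (hε.trans_lt hω)
    exact Set.mem_biUnion hA (show ε / 2 ≤ _ by linarith)
  calc _ ≤ μ.real (⋃ A ∈ ({∅, Finset.univ}ᶜ : Finset (Finset α)), overrepresented A) :=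
        measureReal_mono hcover (measure_ne_top μ _)
    _ ≤ ∑ A ∈ ({∅, Finset.univ}ᶜ : Finset (Finset α)), μ.real (overrepresented A) :=
        measureReal_biUnion_finset_le _ _
    _ ≤ ∑ _A ∈ ({∅, Finset.univ}ᶜ : Finset (Finset α)),
          Real.exp (-2 * Fintype.card ι * (ε / 2) ^ 2) :=
        Finset.sum_le_sum fun A _ ↦
          measureReal_sum_empiricalFreq_sub_averageLaw_ge_le hY hindep A (by positivity)
    _ = _ := by
        rw [Finset.sum_const, nsmul_eq_mul, card_compl_empty_univ]
        ring_nf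

end Frequencies

/-- Weissman's ℓ₁ concentration inequality: for `m` i.i.d. samples from a
distribution `p` on an alphabet of size `k`, the ℓ₁ distance between the
empirical distribution and `p` exceeds `ε` with probability at most
`(2^k − 2) exp(−m ε² / 2)`. -/
theorem weissman_l1_concentration
    (k m : ℕ) (hk : 2 ≤ k) (hm : 1 ≤ m)
    (p : Fin k → ℝ) (hp_nonneg : ∀ j, 0 ≤ p j) (hp_sum : ∑ j, p j = 1)
    {Ω : Type*} [MeasurableSpace Ω] (μ : Measure Ω) [IsProbabilityMeasure μ]
    (Y : Fin m → Ω → Fin k) (hmeas : ∀ i, Measurable (Y i))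
    (hindep : iIndepFun Y μ)
    (hlaw : ∀ i j, μ {ω | Y i ω = j} = ENNReal.ofReal (p j)) :
    ∀ ε : ℝ, 0 < ε →
      μ {ω | ∑ j : Fin k,
          |(1 / (m : ℝ)) *
              ((Finset.univ.filter (fun i : Fin m => Y i ω = j)).card : ℝ) -
            p j| > ε} ≤
        ENNReal.ofReal ((2 ^ k - 2) * Real.exp (-(m : ℝ) * ε ^ 2 / 2)) := by
  intro ε hε
  have : NeZero m := ⟨Nat.one_le_iff_ne_zero.mp hm⟩
  have haverage (j : Fin k) : averageLaw μ Y j = p j :=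
    averageLaw_eq_of_forall_eq_ofReal (hp_nonneg j) (hlaw · j)
  rw [← ofReal_measureReal]
  simpa only [empiricalFreq, haverage, Fintype.card_fin] using
    ENNReal.ofReal_le_ofReal (weissman_l1_concentration_general hmeas hindep hε.le)
end

section
/- Let S be a finite nonempty type, γ ∈ [0, 1), R > 0, and β ≥ 0 real numbers. Let p₁, p₂ : S → S → ℝ be stochastic kernels (pᵢ s s' ≥ 0 and ∑_{s'} pᵢ s s' = 1 for all s) and ρ₁, ρ₂ : S → ℝ reward functions with |ρ₁ s − ρ₂ s| ≤ β for all s and ∑_{s'} |p₁ s s' − p₂ s s'| ≤ β / R for all s. Suppose V₁, V₂ : S → ℝ satisfy the Bellman evaluation equations Vᵢ(s) = ρᵢ(s) + γ · ∑_{s'} pᵢ s s' · Vᵢ(s') for all s, and that |V₂ s| ≤ R / (1 − γ) for all s. Then for every s ∈ S, |V₁(s) − V₂(s)| ≤ (β + γ β / (1 − γ)) / (1 − γ). -/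
/-!
The Bellman operator `T V = ρ + γ P V` of a Markov reward process is a `γ`-contraction in the sup
norm, so any `V` lies within `dist V (T V) / (1 - γ)` of its fixed point. For `T = T₁` and `V = V₂`
the defect `dist V₂ (T₁ V₂)` equals `dist (T₂ V₂) (T₁ V₂)`, which compares the two models on the
single function `V₂`: the rewards contribute `β` and, by Hölder's inequality, the transitions
contribute `γ * (β / R) * (R / (1 - γ))`.
-/

open scoped NNReal

theorem norm_sum_smul_le_sum_norm_mul {ι 𝕜 E : Type*} [SeminormedRing 𝕜]
    [SeminormedAddCommGroup E] [Module 𝕜 E] [IsBoundedSMul 𝕜 E]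
    (s : Finset ι) (a : ι → 𝕜) {v : ι → E} {M : ℝ} (hv : ∀ i ∈ s, ‖v i‖ ≤ M) :
    ‖∑ i ∈ s, a i • v i‖ ≤ (∑ i ∈ s, ‖a i‖) * M := by
  rw [Finset.sum_mul]
  exact norm_sum_le_of_le s fun i hi =>
    (norm_smul_le _ _).trans (mul_le_mul_of_nonneg_left (hv i hi) (norm_nonneg _))

section Algebra

variable {S E : Type*} [Fintype S] [AddCommGroup E] [Module ℝ E]

/-- The Bellman evaluation operator of the Markov reward process with discount factor `γ`, rewards
`ρ` and transition rows `p s`; its fixed points are the value functions of the process. Rewards are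
vectors in `E` and `p` is an arbitrary real matrix, with stochastic rows in the classical case. -/
def bellmanOperator (γ : ℝ) (ρ : S → E) (p : S → S → ℝ) (V : S → E) : S → E :=
  fun s => ρ s + γ • ∑ s', p s s' • V s'

theorem bellmanOperator_value_sub (γ : ℝ) (ρ : S → E) (p : S → S → ℝ) (V W : S → E) (s : S) :
    bellmanOperator γ ρ p V s - bellmanOperator γ ρ p W s =
      γ • ∑ s', p s s' • (V s' - W s') := by
  simp only [bellmanOperator, add_sub_add_left_eq_sub, smul_sub, Finset.sum_sub_distrib]

theorem bellmanOperator_model_sub (γ : ℝ) (ρ₁ ρ₂ : S → E)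
    (p₁ p₂ : S → S → ℝ) (V : S → E) (s : S) :
    bellmanOperator γ ρ₁ p₁ V s - bellmanOperator γ ρ₂ p₂ V s =
      (ρ₁ s - ρ₂ s) + γ • ∑ s', (p₁ s s' - p₂ s s') • V s' := by
  simp only [bellmanOperator, add_sub_add_comm, sub_smul, smul_sub, Finset.sum_sub_distrib]

end Algebra

section SeminormedRewards

variable {S E : Type*} [Fintype S] [SeminormedAddCommGroup E] [NormedSpace ℝ E]

theorem lipschitzWith_bellmanOperator (γ : ℝ≥0) (ρ : S → E) {p : S → S → ℝ}
    (hp : ∀ s, ∑ s', |p s s'| ≤ 1) : LipschitzWith γ (bellmanOperator (γ : ℝ) ρ p) := by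
  refine LipschitzWith.of_dist_le_mul fun V W => (dist_pi_le_iff (by positivity)).2 fun s => ?_
  rw [dist_eq_norm, bellmanOperator_value_sub, norm_smul, NNReal.norm_eq]
  gcongr
  calc ‖∑ s', p s s' • (V s' - W s')‖
      ≤ (∑ s', |p s s'|) * dist V W :=
        norm_sum_smul_le_sum_norm_mul _ _ fun s' _ => by
          simpa only [dist_eq_norm] using dist_le_pi_dist V W s'
    _ ≤ dist V W := mul_le_of_le_one_left dist_nonneg (hp s)

theorem dist_bellmanOperator_le {γ ε δ M : ℝ} (hγ : 0 ≤ γ) {ρ₁ ρ₂ : S → E}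
    {p₁ p₂ : S → S → ℝ} {V : S → E} {s : S} (hρ : ‖ρ₁ s - ρ₂ s‖ ≤ ε)
    (hp : ∑ s', |p₁ s s' - p₂ s s'| ≤ δ) (hV : ∀ s', ‖V s'‖ ≤ M) :
    dist (bellmanOperator γ ρ₁ p₁ V s) (bellmanOperator γ ρ₂ p₂ V s) ≤ ε + γ * (δ * M) := by
  have hM : 0 ≤ M := (norm_nonneg _).trans (hV s)
  have htransition : ‖∑ s', (p₁ s s' - p₂ s s') • V s'‖ ≤ δ * M :=
    (norm_sum_smul_le_sum_norm_mul _ _ fun s' _ => hV s').trans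
      (mul_le_mul_of_nonneg_right hp hM)
  rw [dist_eq_norm, bellmanOperator_model_sub]
  refine norm_add_le_of_le hρ ?_
  rw [norm_smul, Real.norm_of_nonneg hγ]
  gcongr

end SeminormedRewards

theorem simulation_lemma_general {S E : Type*} [Fintype S] [NormedAddCommGroup E] [NormedSpace ℝ E]
    {γ ε δ M : ℝ} (hγ0 : 0 ≤ γ) (hγ1 : γ < 1) {p₁ p₂ : S → S → ℝ} {ρ₁ ρ₂ : S → E}
    (hp₁ : ∀ s, ∑ s', |p₁ s s'| ≤ 1)
    (hρ : ∀ s, ‖ρ₁ s - ρ₂ s‖ ≤ ε) (hp : ∀ s, ∑ s', |p₁ s s' - p₂ s s'| ≤ δ) {V₁ V₂ : S → E}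
    (hV₁ : Function.IsFixedPt (bellmanOperator γ ρ₁ p₁) V₁)
    (hV₂ : Function.IsFixedPt (bellmanOperator γ ρ₂ p₂) V₂)
    (hV₂_bound : ∀ s, ‖V₂ s‖ ≤ M) (s : S) :
    ‖V₁ s - V₂ s‖ ≤ (ε + γ * (δ * M)) / (1 - γ) := by
  have : Nonempty S := ⟨s⟩
  lift γ to ℝ≥0 using hγ0
  have hcontr : ContractingWith γ (bellmanOperator (γ : ℝ) ρ₁ p₁) :=
    ⟨mod_cast hγ1, lipschitzWith_bellmanOperator γ ρ₁ hp₁⟩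
  have hdefect : dist V₂ (bellmanOperator γ ρ₁ p₁ V₂) ≤ ε + γ * (δ * M) := by
    rw [dist_comm, dist_pi_le_iff']
    intro t
    simpa only [hV₂.eq] using
      dist_bellmanOperator_le γ.coe_nonneg (hρ t) (hp t) hV₂_bound
  calc ‖V₁ s - V₂ s‖ = dist (V₂ s) (V₁ s) := by rw [dist_comm, dist_eq_norm]
    _ ≤ dist V₂ V₁ := dist_le_pi_dist V₂ V₁ s
    _ ≤ dist V₂ (bellmanOperator γ ρ₁ p₁ V₂) / (1 - γ) := hcontr.dist_le_of_fixedPoint V₂ hV₁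
    _ ≤ (ε + γ * (δ * M)) / (1 - γ) :=
      div_le_div_of_nonneg_right hdefect (sub_nonneg.2 hγ1.le)

/-- Simulation lemma: value functions of a fixed policy in two Markov reward
processes with `(β, β/R)`-close rewards and transition rows are close. -/
theorem simulation_lemma
    {S : Type*} [Fintype S] [Nonempty S]
    (γ R β : ℝ) (hγ0 : 0 ≤ γ) (hγ1 : γ < 1) (hR : 0 < R) (hβ : 0 ≤ β)
    (p₁ p₂ : S → S → ℝ) (ρ₁ ρ₂ : S → ℝ)
    (hp₁_nonneg : ∀ s s', 0 ≤ p₁ s s') (hp₁_sum : ∀ s, ∑ s' : S, p₁ s s' = 1)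
    (hp₂_nonneg : ∀ s s', 0 ≤ p₂ s s') (hp₂_sum : ∀ s, ∑ s' : S, p₂ s s' = 1)
    (hρ : ∀ s, |ρ₁ s - ρ₂ s| ≤ β)
    (hp : ∀ s, ∑ s' : S, |p₁ s s' - p₂ s s'| ≤ β / R)
    (V₁ V₂ : S → ℝ)
    (hV₁ : ∀ s, V₁ s = ρ₁ s + γ * ∑ s' : S, p₁ s s' * V₁ s')
    (hV₂ : ∀ s, V₂ s = ρ₂ s + γ * ∑ s' : S, p₂ s s' * V₂ s')
    (hV₂_bound : ∀ s, |V₂ s| ≤ R / (1 - γ)) :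
    ∀ s : S, |V₁ s - V₂ s| ≤ (β + γ * β / (1 - γ)) / (1 - γ) := by
  have hp₁_abs (s : S) : ∑ s', |p₁ s s'| ≤ 1 := by
    simp only [abs_of_nonneg (hp₁_nonneg s _), hp₁_sum, le_refl]
  have hweight : β / R * (R / (1 - γ)) = β / (1 - γ) := div_mul_div_cancel₀ hR.ne'
  simpa only [hweight, mul_div_assoc, Real.norm_eq_abs] using
    simulation_lemma_general hγ0 hγ1 hp₁_abs hρ hp
      (funext fun s => (hV₁ s).symm) (funext fun s => (hV₂ s).symm) hV₂_bound
end

section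
/- Let S and A be finite nonempty types, γ ∈ [0, 1), and ε ≥ 0 real numbers, r : S → A → ℝ a reward function, and P : S → A → S → ℝ a stochastic kernel (P s a s' ≥ 0 and ∑_{s'} P s a s' = 1 for all s, a). Suppose Q* : S → A → ℝ satisfies the Bellman optimality equation Q*(s,a) = r s a + γ · ∑_{s'} P s a s' · max_{a'} Q*(s',a') for all s, a; suppose Q̂ : S → A → ℝ satisfies |Q̂(s,a) − Q*(s,a)| ≤ ε for all s, a; suppose π : S → A is greedy with respect to Q̂, i.e., Q̂(s, π s) = max_{a} Q̂(s,a) for all s; and suppose V^π : S → ℝ satisfies the policy-evaluation equation V^π(s) = r s (π s) + γ · ∑_{s'} P s (π s) s' · V^π(s') for all s. Then for every s ∈ S, V^π(s) ≥ max_{a} Q*(s,a) − 2ε / (1 − γ). -/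
open Finset

/-!
Let `π` be the greedy policy. Two comparisons of `Q̂` with `Q*` show that replacing an optimal
action by `π s` loses at most `2ε`, so `V*` satisfies the evaluation equation of `π` up to an error
`2ε`. Subtracting that equation gives `V* - V^π ≤ 2ε + γ P_π (V* - V^π)`, and at a state where
`V* - V^π` attains its maximum `M` this yields `M ≤ 2ε + γ M`.
-/

section

variable {R K S A : Type*}

theorem isLUB_range_sup'_univ [SemilatticeSup R] [Fintype A] [Nonempty A] (f : A → R) :
    IsLUB (Set.range f) (univ.sup' univ_nonempty f) :=
  ⟨Set.forall_mem_range.mpr fun a => le_sup' f (mem_univ a),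
    fun _ hb => sup'_le _ _ fun a _ => hb (Set.mem_range_self a)⟩

/-- A policy is greedy for a Q-table if it picks a maximizing action in each state. Stated
without a maximum operator, so that it makes sense for infinite action sets. -/
def IsGreedy [LE R] (Q : S → A → R) (π : S → A) : Prop :=
  ∀ s a, Q s a ≤ Q s (π s)

/-- The one-step lookahead value: the expected discounted return of taking action `a` in state `s`
and collecting the terminal value `V` afterwards. With `V s = max_a Q s a`, the equation
`Q s a = lookahead γ r P V s a` is the Bellman optimality equation; the policy-evaluation equation
is `V s = lookahead γ r P V s (π s)`. -/
def lookahead [Fintype S] [Semiring R] (γ : R) (r : S → A → R) (P : S → A → S → R) (V : S → R)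
    (s : S) (a : A) : R :=
  r s a + γ * ∑ s', P s a s' * V s'

theorem lookahead_sub_lookahead [Fintype S] [Ring R] (γ : R) (r : S → A → R)
    (P : S → A → S → R) (U V : S → R) (s : S) (a : A) :
    lookahead γ r P U s a - lookahead γ r P V s a = γ * ∑ s', P s a s' * (U s' - V s') := by
  simp only [lookahead, mul_sub, sum_sub_distrib, add_sub_add_left_eq_sub]

section OrderedRing

variable [CommRing R] [LinearOrder R] [IsStrictOrderedRing R]

theorem IsGreedy.le_add_two_mul {Q Q' : S → A → R} {π : S → A} {ε : R} (hπ : IsGreedy Q' π)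
    (hQ : ∀ s a, |Q' s a - Q s a| ≤ ε) (s : S) (a : A) : Q s a ≤ Q s (π s) + 2 * ε := by
  have lower : Q s a - ε ≤ Q' s a := by linarith [(abs_le.mp (hQ s a)).1]
  have upper : Q' s (π s) ≤ Q s (π s) + ε := by linarith [(abs_le.mp (hQ s (π s))).2]
  linarith [hπ s a]

theorem sum_mul_le_of_sum_le_one [Fintype S] {p f : S → R} {M : R} (hp : ∀ s, 0 ≤ p s)
    (hp_sum : ∑ s, p s ≤ 1) (hM : 0 ≤ M) (hf : ∀ s, f s ≤ M) : ∑ s, p s * f s ≤ M :=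
  calc ∑ s, p s * f s
      ≤ ∑ s, p s * M := sum_le_sum fun s _ => mul_le_mul_of_nonneg_left (hf s) (hp s)
    _ = (∑ s, p s) * M := (sum_mul ..).symm
    _ ≤ M := mul_le_of_le_one_left hM hp_sum

end OrderedRing

variable [Fintype S] [Field K] [LinearOrder K] [IsStrictOrderedRing K]

theorem le_div_one_sub_of_le_add_mul_sum {γ c : K} {p : S → S → K} {d : S → K}
    (hγ0 : 0 ≤ γ) (hγ1 : γ < 1) (hc : 0 ≤ c) (hp : ∀ s s', 0 ≤ p s s')
    (hp_sum : ∀ s, ∑ s', p s s' ≤ 1) (hd : ∀ s, d s ≤ c + γ * ∑ s', p s s' * d s') (s : S) :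
    d s ≤ c / (1 - γ) := by
  have : Nonempty S := ⟨s⟩
  obtain ⟨m, hm⟩ := Finite.exists_max d
  refine (hm s).trans ?_
  rcases le_total (d m) 0 with hneg | hpos
  · exact hneg.trans (div_nonneg hc (sub_nonneg.mpr hγ1.le))
  · have average_le : ∑ s', p m s' * d s' ≤ d m :=
      sum_mul_le_of_sum_le_one (hp m) (hp_sum m) hpos hm
    have self_bound : d m ≤ c + γ * d m := (hd m).trans (by gcongr)
    rw [le_div_iff₀ (sub_pos.mpr hγ1)]
    linarith

theorem sub_le_div_one_sub_of_le_lookahead_add {γ c : K} {r : S → A → K} {P : S → A → S → K}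
    {π : S → A} {U V : S → K} (hγ0 : 0 ≤ γ) (hγ1 : γ < 1) (hc : 0 ≤ c)
    (hP : ∀ s s', 0 ≤ P s (π s) s') (hP_sum : ∀ s, ∑ s', P s (π s) s' ≤ 1)
    (hU : ∀ s, U s ≤ lookahead γ r P U s (π s) + c)
    (hV : ∀ s, lookahead γ r P V s (π s) ≤ V s) (s : S) :
    U s - V s ≤ c / (1 - γ) := by
  have gap_le (t : S) : U t - V t ≤ c + γ * ∑ s', P t (π t) s' * (U s' - V s') := by
    rw [← lookahead_sub_lookahead γ r P]
    linarith [hU t, hV t]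
  exact le_div_one_sub_of_le_add_mul_sum hγ0 hγ1 hc hP hP_sum gap_le s

theorem greedy_policy_suboptimality_general {γ ε : K} (hγ0 : 0 ≤ γ) (hγ1 : γ < 1)
    {r : S → A → K} {P : S → A → S → K} (hP : ∀ s a s', 0 ≤ P s a s')
    (hP_sum : ∀ s a, ∑ s', P s a s' ≤ 1) {Qstar Qhat : S → A → K} {Vstar Vπ : S → K} {π : S → A}
    (hVstar : ∀ s, IsLUB (Set.range (Qstar s)) (Vstar s))
    (hQstar : ∀ s a, Qstar s a = lookahead γ r P Vstar s a)
    (hQhat : ∀ s a, |Qhat s a - Qstar s a| ≤ ε) (hπ : IsGreedy Qhat π)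
    (hVπ : ∀ s, Vπ s = lookahead γ r P Vπ s (π s)) (s : S) :
    Vπ s ≥ Vstar s - 2 * ε / (1 - γ) := by
  have hε : 0 ≤ ε := (abs_nonneg _).trans (hQhat s (π s))
  have Vstar_le (t : S) : Vstar t ≤ lookahead γ r P Vstar t (π t) + 2 * ε := by
    rw [← hQstar]
    exact (hVstar t).2 (Set.forall_mem_range.mpr (hπ.le_add_two_mul hQhat t))
  have gap : Vstar s - Vπ s ≤ 2 * ε / (1 - γ) :=
    sub_le_div_one_sub_of_le_lookahead_add hγ0 hγ1 (by positivity) (fun t => hP t (π t))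
      (fun t => hP_sum t (π t)) Vstar_le (fun t => (hVπ t).ge) s
  exact sub_le_comm.mp gap

end

/-- Greedy-policy suboptimality: acting greedily with respect to a uniformly
`ε`-accurate Q-table yields a `2ε/(1−γ)`-optimal policy. -/
theorem greedy_policy_suboptimality
    {S A : Type*} [Fintype S] [Fintype A] [Nonempty S] [Nonempty A]
    (γ ε : ℝ) (hγ0 : 0 ≤ γ) (hγ1 : γ < 1) (hε : 0 ≤ ε)
    (r : S → A → ℝ) (P : S → A → S → ℝ)
    (hP_nonneg : ∀ s a s', 0 ≤ P s a s')
    (hP_sum : ∀ s a, ∑ s' : S, P s a s' = 1)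
    (Qstar : S → A → ℝ)
    (hQstar : ∀ s a, Qstar s a =
      r s a + γ * ∑ s' : S, P s a s' *
        Finset.univ.sup' Finset.univ_nonempty (fun a' : A => Qstar s' a'))
    (Qhat : S → A → ℝ)
    (hQhat : ∀ s a, |Qhat s a - Qstar s a| ≤ ε)
    (π : S → A)
    (hπ : ∀ s, Qhat s (π s) =
      Finset.univ.sup' Finset.univ_nonempty (fun a : A => Qhat s a))
    (Vπ : S → ℝ)
    (hVπ : ∀ s, Vπ s = r s (π s) + γ * ∑ s' : S, P s (π s) s' * Vπ s') :
    ∀ s : S,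
      Vπ s ≥
        Finset.univ.sup' Finset.univ_nonempty (fun a : A => Qstar s a) -
          2 * ε / (1 - γ) :=
  greedy_policy_suboptimality_general hγ0 hγ1 hP_nonneg (fun s a => (hP_sum s a).le)
    (fun s => isLUB_range_sup'_univ (Qstar s)) hQstar hQhat
    (fun s a => (hπ s).symm ▸ le_sup' (Qhat s) (mem_univ a)) hVπ
end

section
/- Let E and F be finite types, g : ℕ → E × F any function, and m₁, m₂, n natural numbers. Then the cardinality of the set { t ∈ Finset.range n : |{ t' ∈ Finset.range t : (g t').1 = (g t).1 }| < m₁ ∨ |{ t' ∈ Finset.range t : (g t').2 = (g t).2 }| < m₂ } is at most (Fintype.card E) · m₁ + (Fintype.card F) · m₂. -/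
/-!
The successive visits to a fixed value see `0, 1, 2, …` earlier visits to it, so at most `m` of
them see fewer than `m`. Summing over the values visited bounds one family. A step counted for
the pair is counted for one of its two components, which is why the bounds add.
-/

theorem card_filter_and_count_lt_le (p : ℕ → Prop) [DecidablePred p] (s : Finset ℕ) (m : ℕ) :
    (s.filter fun t => p t ∧ Nat.count p t < m).card ≤ m := by
  refine (Finset.card_le_card_of_injOn (t := Finset.range m) (Nat.count p)
    (fun t ht => ?_) fun t ht u hu htu => ?_).trans_eq (Finset.card_range m)
  · exact Finset.mem_coe.2 (Finset.mem_range.2 (Finset.mem_filter.1 ht).2.2)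
  · exact Nat.count_injective (Finset.mem_filter.1 ht).2.1 (Finset.mem_filter.1 hu).2.1 htu

theorem card_filter_count_eq_lt_le_card_image_mul {α : Type*} [DecidableEq α]
    (f : ℕ → α) (s : Finset ℕ) (m : ℕ) :
    (s.filter fun t => Nat.count (fun t' => f t' = f t) t < m).card ≤ (s.image f).card * m := by
  rw [mul_comm]
  refine Finset.card_le_mul_card_image_of_maps_to
    (fun t ht => Finset.mem_image_of_mem f (Finset.mem_filter.1 ht).1) m fun a _ => ?_
  have fiber_subset :
      ((s.filter fun t => Nat.count (fun t' => f t' = f t) t < m).filter fun t => f t = a) ⊆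
        s.filter fun t => f t = a ∧ Nat.count (fun t' => f t' = a) t < m := by
    intro t ht
    obtain ⟨ht_lt, rfl⟩ := Finset.mem_filter.1 ht
    obtain ⟨hts, hlt⟩ := Finset.mem_filter.1 ht_lt
    exact Finset.mem_filter.2 ⟨hts, rfl, hlt⟩
  exact (Finset.card_le_card fiber_subset).trans (card_filter_and_count_lt_le _ s m)

theorem unknown_steps_two_families_le_general
    {E F : Type*} [DecidableEq E] [DecidableEq F]
    (g : ℕ → E × F) (m₁ m₂ : ℕ) (s : Finset ℕ) :
    (s.filter
        (fun t =>
          ((Finset.range t).filter (fun t' => (g t').1 = (g t).1)).card < m₁ ∨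
          ((Finset.range t).filter (fun t' => (g t').2 = (g t).2)).card < m₂)).card ≤
      (s.image fun t => (g t).1).card * m₁ + (s.image fun t => (g t).2).card * m₂ := by
  simp only [← Nat.count_eq_card_filter_range, Finset.filter_or]
  exact (Finset.card_union_le _ _).trans <| Nat.add_le_add
    (card_filter_count_eq_lt_le_card_image_mul (fun t => (g t).1) s m₁)
    (card_filter_count_eq_lt_le_card_image_mul (fun t => (g t).2) s m₂)

/-- Two-family pigeonhole visit-counting (Theorem A.3): the number of time
steps at which either the environment component or the automaton component has
previously been visited fewer than its threshold number of times is at most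
`|E|·m₁ + |F|·m₂`. -/
theorem unknown_steps_two_families_le
    {E F : Type*} [Fintype E] [Fintype F] [DecidableEq E] [DecidableEq F]
    (g : ℕ → E × F) (m₁ m₂ n : ℕ) :
    ((Finset.range n).filter
        (fun t =>
          ((Finset.range t).filter (fun t' => (g t').1 = (g t).1)).card < m₁ ∨
          ((Finset.range t).filter (fun t' => (g t').2 = (g t).2)).card < m₂)).card ≤
      Fintype.card E * m₁ + Fintype.card F * m₂ := by
  refine (unknown_steps_two_families_le_general g m₁ m₂ (Finset.range n)).trans ?_
  gcongr <;> exact Finset.card_le_univ _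
end
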